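/- Let M ∈ (1/2)ℕ, r ∈ M+ℤ, z ∈ ℂ with Im z > 0, and w ∈ ℂ with Re w > 0 (so that i/w lies in the upper half-plane). Then ϑ⁺_{r,0,M}(z; i/w) = √w · e^{−2πirz} ∫_ℝ e^{−πwx² − 2πirx/√(2M)} / (1 − e^{4πiMz} e^{2πi√(2M)x}) dx, where √w is the principal branch. -/

import Mathlib

/-!
Write `A = e^{4πiMz}`, `s = √(2M)` and `G(x) = e^{-πwx² - 2πirx/s}`. Since `Im z > 0` and `M > 0`,
`|A| < 1`, while `|e^{2πisx}| = 1` for real `x`; so `1 / (1 - A e^{2πisx})` is a geometric series,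
and it may be integrated termwise against `G` because the `n`-th term has norm `|G(x)| |A|ⁿ`.
The `n`-th integral is the Gaussian Fourier integral `∫ e^{2πiax - πwx²} dx = w^{-1/2} e^{-πa²/w}`
at `a = sn - r/s = (2Mn - r)/s`, and `a² = (2Mn - r)²/(2M)` gives the `n`-th term of the
partial theta series at `τ = i/w`.
-/

open Complex Real Filter Topology

/-- The partial theta function
`ϑ⁺_{r,ε,M}(z;τ) = Σ_{n≥0} (-1)^{nε} e^{2πi(2Mn-r)z} q^{(2Mn-r)²/(4M)}`. -/
noncomputable def thetaPlus (r : ℝ) (ε : ℕ) (M : ℝ) (z τ : ℂ) : ℂ :=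
  ∑' n : ℕ, (-1 : ℂ) ^ (n * ε) * Complex.exp (2 * ↑π * I * (2 * (M : ℂ) * n - (r : ℂ)) * z) *
    Complex.exp (2 * ↑π * I * τ * (2 * (M : ℂ) * n - (r : ℂ)) ^ 2 / (4 * (M : ℂ)))

/-- The Gaussian Fourier integral, normalised with the principal branch of `√w`. -/
lemma sqrt_mul_integral_gaussian (w : ℂ) (hw : 0 < w.re) (a : ℂ) :
    w ^ ((1 : ℂ) / 2) * ∫ x : ℝ, cexp (-(↑π * w * x ^ 2) + 2 * ↑π * I * a * x) =
      cexp (-(↑π * a ^ 2 / w)) := by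
  have hw0 : w ≠ 0 := by rintro rfl; simp at hw
  have hpi : (π : ℂ) ≠ 0 := by exact_mod_cast Real.pi_ne_zero
  have hb : 0 < ((π : ℂ) * w).re := by
    rw [Complex.re_ofReal_mul]; exact mul_pos Real.pi_pos hw
  have h := fourierIntegral_gaussian hb (2 * π * a)
  have e1 : ∀ x : ℝ, cexp (-(↑π * w * x ^ 2) + 2 * ↑π * I * a * x) =
      cexp (I * (2 * π * a) * x) * cexp (-(π * w) * x ^ 2) := by
    intro x; rw [← Complex.exp_add]; congr 1; ring
  have e2 : (π : ℂ) / (π * w) = w⁻¹ := by field_simp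
  -- `Re w > 0` keeps `w` off the branch cut, so the principal root commutes with inversion.
  have harg : w.arg ≠ π := by
    intro h
    have := Complex.arg_eq_pi_iff.mp h
    linarith [this.1]
  have hpow : w ^ ((1 : ℂ) / 2) ≠ 0 := by simp [Complex.cpow_eq_zero_iff, hw0]
  simp_rw [e1]
  rw [h, e2, Complex.inv_cpow _ _ harg, ← mul_assoc, mul_inv_cancel₀ hpow, one_mul]
  congr 1
  field_simp
  ring

/-- Inversion formula for `ϑ⁺_{r,0,M}(z;i/w)` for `Im z > 0`, `Re w > 0`
((8.1) of the paper). -/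
theorem stmt14 (M : ℝ) (hM : ∃ m : ℕ, 0 < m ∧ M = (m : ℝ) / 2)
    (r : ℝ) (hr : ∃ k : ℤ, r = M + k)
    (z : ℂ) (hz : 0 < z.im) (w : ℂ) (hw : 0 < w.re) :
    thetaPlus r 0 M z (I / w) =
      w ^ ((1 : ℂ) / 2) * Complex.exp (-(2 * ↑π * I * r * z)) *
        ∫ x : ℝ,
          Complex.exp (-(↑π * w * x ^ 2) - 2 * ↑π * I * r * x / (Real.sqrt (2 * M) : ℝ)) /
            (1 - Complex.exp (4 * ↑π * I * M * z) *
              Complex.exp (2 * ↑π * I * (Real.sqrt (2 * M) : ℝ) * x)) := by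
  have hM0 : 0 < M := by
    obtain ⟨m, hm, rfl⟩ := hM
    positivity
  have hw0 : w ≠ 0 := by rintro rfl; simp at hw
  have hMc : (M : ℂ) ≠ 0 := by exact_mod_cast hM0.ne'
  have hs0 : ((Real.sqrt (2 * M) : ℝ) : ℂ) ≠ 0 := by
    have : 0 < Real.sqrt (2 * M) := Real.sqrt_pos.mpr (by positivity)
    exact_mod_cast this.ne'
  have hs2 : ((Real.sqrt (2 * M) : ℝ) : ℂ) ^ 2 = 2 * M := by
    have : Real.sqrt (2 * M) ^ 2 = 2 * M := Real.sq_sqrt (by positivity)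
    exact_mod_cast this
  set s : ℂ := ((Real.sqrt (2 * M) : ℝ) : ℂ) with hs
  set A : ℂ := cexp (4 * ↑π * I * M * z) with hA
  have hA1 : ‖A‖ < 1 := by
    rw [hA, Complex.norm_exp, Real.exp_lt_one_iff]
    have : (4 * (π : ℂ) * I * M * z).re = -(4 * π * M * z.im) := by
      simp
    rw [this]
    have := Real.pi_pos
    have : 0 < 4 * π * M * z.im := by positivity
    linarith
  have hB : ∀ x : ℝ, ‖cexp (2 * ↑π * I * s * x)‖ = 1 := by
    intro x
    rw [Complex.norm_exp]
    simp [hs]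
  let G : ℝ → ℂ := fun x => cexp (-(↑π * w * x ^ 2) - 2 * ↑π * I * r * x / s)
  let F : ℕ → ℝ → ℂ := fun n x => G x * (A * cexp (2 * ↑π * I * s * x)) ^ n
  have hG : MeasureTheory.Integrable G := by
    have hb : 0 < ((π : ℂ) * w).re := by
      rw [Complex.re_ofReal_mul]
      exact mul_pos Real.pi_pos hw
    refine (integrable_cexp_quadratic hb (-(2 * π * I * r / s)) 0).congr (.of_forall fun x => ?_)
    simp only [G]
    congr 1
    ring
  have hFnorm : ∀ n x, ‖F n x‖ = ‖G x‖ * ‖A‖ ^ n := by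
    intro n x
    simp only [F, norm_mul, norm_pow, hB, mul_one]
  have hFint : ∀ n, MeasureTheory.Integrable (F n) := by
    intro n
    refine (hG.norm.mul_const (‖A‖ ^ n)).mono' ?_ (.of_forall fun x => (hFnorm n x).le)
    have : Continuous (F n) := by simp only [F, G]; fun_prop
    exact this.aestronglyMeasurable
  have hsum : Summable fun n => ∫ x, ‖F n x‖ := by
    simp_rw [hFnorm, MeasureTheory.integral_mul_const]
    exact (summable_geometric_of_lt_one (norm_nonneg _) hA1).mul_left _
  have key := (MeasureTheory.hasSum_integral_of_summable_integral_norm hFint hsum).tsum_eq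
  have hgeo : ∀ x, ∑' n, F n x = G x / (1 - A * cexp (2 * ↑π * I * s * x)) := by
    intro x
    simp only [F]
    rw [tsum_mul_left, tsum_geometric_of_norm_lt_one (by rw [norm_mul, hB, mul_one]; exact hA1),
      div_eq_mul_inv]
  simp_rw [hgeo] at key
  change _ = _ * ∫ x, G x / _
  rw [← key, ← tsum_mul_left, thetaPlus]
  congr 1
  ext n
  have hF : ∀ x, F n x = A ^ n *
      cexp (-(↑π * w * x ^ 2) + 2 * ↑π * I * ((2 * M * n - r) / s) * x) := by
    intro x
    simp only [F, G]
    rw [mul_pow, ← Complex.exp_nat_mul (2 * ↑π * I * s * x) n, mul_left_comm, ← Complex.exp_add]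
    congr 2
    rw [sub_div, show (2 * M * n : ℂ) / s = n * s by rw [← hs2]; field_simp]
    ring
  simp_rw [hF]
  rw [MeasureTheory.integral_const_mul]
  have hg := sqrt_mul_integral_gaussian w hw ((2 * M * n - r) / s)
  rw [show ∀ a b c d : ℂ, a * b * (c * d) = b * c * (a * d) from fun a b c d => by ring, hg,
    mul_zero, pow_zero, one_mul, hA, ← Complex.exp_nat_mul (4 * ↑π * I * M * z) n,
    ← Complex.exp_add (-(2 * ↑π * I * r * z))]
  congr 2
  · ring
  · rw [div_pow, hs2]
    field_simp
    rw [I_sq]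
    ring
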